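/- Let p ∈ (0,1), λ = min(p, 1−p), and 0 ≤ δ ≤ 1. Then for every f : {−1,1}^n → ℝ, under the p-biased measure μ one has ‖T_{√(λ/(1−λ))·δ} f‖₂ ≤ ‖f‖_{1+δ²}. -/

import Mathlib

open Filter Function Real

noncomputable def pwt (p : ℝ) {n : ℕ} (x : Fin n → Bool) : ℝ :=
  ∏ i, if x i then p else 1 - p

noncomputable def pE (p : ℝ) {n : ℕ} (f : (Fin n → Bool) → ℝ) : ℝ :=
  ∑ x, pwt p x * f x

noncomputable def pNorm (p q : ℝ) {n : ℕ} (f : (Fin n → Bool) → ℝ) : ℝ :=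
  (pE p fun x => |f x| ^ q) ^ (1 / q)

noncomputable def pVar (p : ℝ) {n : ℕ} (f : (Fin n → Bool) → ℝ) : ℝ :=
  pE p (fun x => f x ^ 2) - (pE p f) ^ 2

noncomputable def condE (p : ℝ) {n : ℕ} (i : Fin n) (f : (Fin n → Bool) → ℝ) :
    (Fin n → Bool) → ℝ :=
  fun x => (1 - p) * f (Function.update x i false) + p * f (Function.update x i true)

noncomputable def chi (p : ℝ) {n : ℕ} (S : Finset (Fin n)) (x : Fin n → Bool) : ℝ :=
  ∏ i ∈ S, ((if x i then (1:ℝ) else -1) - (2 * p - 1)) / (2 * Real.sqrt (p * (1 - p)))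

noncomputable def fhat (p : ℝ) {n : ℕ} (f : (Fin n → Bool) → ℝ) (S : Finset (Fin n)) : ℝ :=
  pE p fun x => f x * chi p S x

noncomputable def noiseOp (p δ : ℝ) {n : ℕ} (f : (Fin n → Bool) → ℝ) :
    (Fin n → Bool) → ℝ :=
  fun x => ∑ S : Finset (Fin n), δ ^ S.card * fhat p f S * chi p S x

lemma aux_h (s : ℝ) (hs0 : 0 ≤ s) (hs1 : s ≤ 1) (y : ℝ) (hy0 : 0 ≤ y) (hy1 : y ≤ 1) :
    0 ≤ (1 + y) ^ s - (1 - y) ^ s - 2 * s * y := by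
  rcases hs0.eq_or_lt with h0 | h0
  · subst h0; simp
  have key : MonotoneOn (fun y : ℝ => (1 + y) ^ s - (1 - y) ^ s - 2 * s * y) (Set.Icc 0 1) := by
    have hder : ∀ x ∈ Set.Ioo (0:ℝ) 1, HasDerivAt
        (fun y : ℝ => (1 + y) ^ s - (1 - y) ^ s - 2 * s * y)
        (1 * s * (1 + x) ^ (s - 1) - (-1) * s * (1 - x) ^ (s - 1) - 2 * s * 1) x := by
      intro x hx
      have h1 : HasDerivAt (fun y : ℝ => 1 + y) 1 x := (hasDerivAt_id x).const_add 1
      have h2 : HasDerivAt (fun y : ℝ => 1 - y) (-1) x := (hasDerivAt_id x).const_sub 1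
      exact ((h1.rpow_const (Or.inl (by linarith [hx.1]))).sub
        (h2.rpow_const (Or.inl (by linarith [hx.2])))).sub ((hasDerivAt_id x).const_mul (2 * s))
    apply monotoneOn_of_deriv_nonneg (convex_Icc 0 1)
    · apply ContinuousOn.sub
      · apply ContinuousOn.sub
        · exact ContinuousOn.rpow_const (by fun_prop) (fun x _ => Or.inr hs0)
        · exact ContinuousOn.rpow_const (by fun_prop) (fun x _ => Or.inr hs0)
      · fun_prop
    · rw [interior_Icc]
      exact fun x hx => (hder x hx).differentiableAt.differentiableWithinAt
    · rw [interior_Icc]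
      intro x hx
      rw [(hder x hx).deriv]
      have hu : 0 < (1 + x) ^ (s - 1) := Real.rpow_pos_of_pos (by linarith [hx.1]) _
      have hv : 0 < (1 - x) ^ (s - 1) := Real.rpow_pos_of_pos (by linarith [hx.2]) _
      have huv : 1 ≤ (1 + x) ^ (s - 1) * (1 - x) ^ (s - 1) := by
        rw [← Real.mul_rpow (by linarith [hx.1]) (by linarith [hx.2])]
        apply Real.one_le_rpow_of_pos_of_le_one_of_nonpos
        · nlinarith [hx.1, hx.2]
        · nlinarith [hx.1, hx.2]
        · linarith
      have h2 : 2 ≤ (1 + x) ^ (s - 1) + (1 - x) ^ (s - 1) := by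
        nlinarith [sq_nonneg ((1 + x) ^ (s - 1) - (1 - x) ^ (s - 1))]
      nlinarith
  have := key (Set.left_mem_Icc.2 zero_le_one) ⟨hy0, hy1⟩ hy0
  simpa using this

lemma aux_g (s : ℝ) (hs0 : 0 ≤ s) (hs1 : s ≤ 1) (y : ℝ) (hy0 : 0 ≤ y) (hy1 : y ≤ 1) :
    1 + (1 + s) / 2 * s * y ^ 2 ≤ ((1 + y) ^ (1 + s) + (1 - y) ^ (1 + s)) / 2 := by
  have key : MonotoneOn (fun y : ℝ => (1 + y) ^ (1 + s) + (1 - y) ^ (1 + s)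
      - (1 + s) * s * y ^ 2) (Set.Icc 0 1) := by
    have hder : ∀ x ∈ Set.Ioo (0:ℝ) 1, HasDerivAt
        (fun y : ℝ => (1 + y) ^ (1 + s) + (1 - y) ^ (1 + s) - (1 + s) * s * y ^ 2)
        (1 * (1 + s) * (1 + x) ^ (1 + s - 1) + (-1) * (1 + s) * (1 - x) ^ (1 + s - 1)
          - (1 + s) * s * (2 * x)) x := by
      intro x hx
      have h1 : HasDerivAt (fun y : ℝ => 1 + y) 1 x := (hasDerivAt_id x).const_add 1
      have h2 : HasDerivAt (fun y : ℝ => 1 - y) (-1) x := (hasDerivAt_id x).const_sub 1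
      have h3 : HasDerivAt (fun y : ℝ => y ^ 2) (2 * x) x := by
        simpa using hasDerivAt_pow 2 x
      exact ((h1.rpow_const (Or.inl (by linarith [hx.1]))).add
        (h2.rpow_const (Or.inl (by linarith [hx.2])))).sub (h3.const_mul ((1 + s) * s))
    apply monotoneOn_of_deriv_nonneg (convex_Icc 0 1)
    · apply ContinuousOn.sub
      · apply ContinuousOn.add
        · exact ContinuousOn.rpow_const (by fun_prop) (fun x _ => Or.inr (by linarith))
        · exact ContinuousOn.rpow_const (by fun_prop) (fun x _ => Or.inr (by linarith))
      · fun_prop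
    · rw [interior_Icc]
      exact fun x hx => (hder x hx).differentiableAt.differentiableWithinAt
    · rw [interior_Icc]
      intro x hx
      rw [(hder x hx).deriv]
      have h := aux_h s hs0 hs1 x hx.1.le hx.2.le
      have e : 1 + s - 1 = s := by ring
      rw [e]
      nlinarith
  have := key (Set.left_mem_Icc.2 zero_le_one) ⟨hy0, hy1⟩ hy0
  simp at this
  linarith

lemma bonami_le (s : ℝ) (hs0 : 0 ≤ s) (hs1 : s ≤ 1) (a b : ℝ) (hb : 0 ≤ b) (hab : b ≤ a) :
    ((a + b) / 2) ^ 2 + s * ((a - b) / 2) ^ 2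
      ≤ (((a ^ (1 + s) + b ^ (1 + s)) / 2) ^ (1 / (1 + s))) ^ 2 := by
  have ha : 0 ≤ a := hb.trans hab
  have hq : 0 < 1 + s := by linarith
  rcases ha.eq_or_lt with h0 | h0
  · subst h0
    have : b = 0 := le_antisymm hab hb
    subst this
    simp
    positivity
  set m := (a + b) / 2 with hm
  have hmp : 0 < m := by rw [hm]; linarith
  set y := (a - b) / 2 / m with hy
  have hd : (a - b) / 2 = m * y := by rw [hy]; field_simp
  have hy0 : 0 ≤ y := by rw [hy]; apply div_nonneg _ hmp.le; linarith
  have hy1 : y ≤ 1 := by rw [hy, div_le_one hmp, hm]; linarith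
  have ea : a = m * (1 + y) := by linarith
  have eb : b = m * (1 - y) := by linarith
  have hg := aux_g s hs0 hs1 y hy0 hy1
  have hL : (1 + s * y ^ 2) ^ ((1 + s) / 2) ≤ 1 + (1 + s) / 2 * s * y ^ 2 := by
    have := rpow_one_add_le_one_add_mul_self (s := s * y ^ 2) (p := (1 + s) / 2)
      (by nlinarith [mul_nonneg hs0 (sq_nonneg y)]) (by linarith) (by linarith)
    linarith
  have hL' := hL.trans hg
  have hpos : 0 ≤ 1 + s * y ^ 2 := by positivity
  have h3 : 1 + s * y ^ 2 ≤ ((((1 + y) ^ (1 + s) + (1 - y) ^ (1 + s)) / 2) ^ (1 / (1 + s))) ^ 2 := by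
    have := Real.rpow_le_rpow (by positivity) hL' (z := 2 / (1 + s)) (by positivity)
    rw [← Real.rpow_mul hpos] at this
    have e : (1 + s) / 2 * (2 / (1 + s)) = 1 := by field_simp
    rw [e, Real.rpow_one] at this
    refine this.trans (le_of_eq ?_)
    have h1y : 0 ≤ 1 - y := by linarith
    rw [← Real.rpow_natCast, ← Real.rpow_mul (by positivity)]
    congr 1
    push_cast
    ring
  have h1y : 0 ≤ 1 - y := by linarith
  have e2 : ((a ^ (1 + s) + b ^ (1 + s)) / 2) ^ (1 / (1 + s))
      = m * (((1 + y) ^ (1 + s) + (1 - y) ^ (1 + s)) / 2) ^ (1 / (1 + s)) := by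
    rw [ea, eb, Real.mul_rpow hmp.le (by positivity), Real.mul_rpow hmp.le h1y, ← mul_add,
      mul_div_assoc, Real.mul_rpow (by positivity) (by positivity), ← Real.rpow_mul hmp.le,
      mul_one_div_cancel hq.ne', Real.rpow_one]
  rw [e2, hd, mul_pow, mul_pow]
  nlinarith [sq_nonneg m, mul_le_mul_of_nonneg_left h3 (sq_nonneg m)]

lemma bonami (s : ℝ) (hs0 : 0 ≤ s) (hs1 : s ≤ 1) (a b : ℝ) (ha : 0 ≤ a) (hb : 0 ≤ b) :
    ((a + b) / 2) ^ 2 + s * ((a - b) / 2) ^ 2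
      ≤ (((a ^ (1 + s) + b ^ (1 + s)) / 2) ^ (1 / (1 + s))) ^ 2 := by
  rcases le_total b a with h | h
  · exact bonami_le s hs0 hs1 a b hb h
  · have := bonami_le s hs0 hs1 b a ha h
    rw [add_comm (a ^ (1 + s))]
    nlinarith

lemma two_point_half (s : ℝ) (hs0 : 0 ≤ s) (hs1 : s ≤ 1) (p : ℝ) (hp0 : 0 ≤ p) (hp1 : p ≤ 1 / 2)
    (a b : ℝ) (ha : 0 ≤ a) (hb : 0 ≤ b) :
    (p * a + (1 - p) * b) ^ 2 + s * p ^ 2 * (a - b) ^ 2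
      ≤ ((p * a ^ (1 + s) + (1 - p) * b ^ (1 + s)) ^ (1 / (1 + s))) ^ 2 := by
  have hB := bonami s hs0 hs1 a b ha hb
  have hq : 0 < 1 + s := by linarith
  have hA0 : 0 ≤ (a ^ (1 + s) + b ^ (1 + s)) / 2 := by positivity
  set M := ((a ^ (1 + s) + b ^ (1 + s)) / 2) ^ (1 / (1 + s)) with hM
  have hM0 : 0 ≤ M := by positivity
  have hMq : M ^ (1 + s) = (a ^ (1 + s) + b ^ (1 + s)) / 2 := by
    rw [hM, ← Real.rpow_mul hA0, one_div_mul_cancel hq.ne', Real.rpow_one]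
  have hmM : (a + b) / 2 ≤ M := by
    apply le_of_sq_le_sq _ hM0
    nlinarith [mul_nonneg hs0 (sq_nonneg ((a - b) / 2))]
  have h1 : (p * a + (1 - p) * b) ^ 2 + s * p ^ 2 * (a - b) ^ 2
      ≤ (2 * p * M + (1 - 2 * p) * b) ^ 2 := by
    have k1 := mul_le_mul_of_nonneg_left hB (by positivity : 0 ≤ 4 * p ^ 2)
    have k2 := mul_le_mul_of_nonneg_left hmM
      (mul_nonneg (mul_nonneg (by linarith : 0 ≤ 4 * p) (by linarith : 0 ≤ 1 - 2 * p)) hb)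
    nlinarith
  have hc := (convexOn_rpow (p := 1 + s) (by linarith)).2 (Set.mem_Ici.2 hM0) (Set.mem_Ici.2 hb)
    (by linarith : 0 ≤ 2 * p) (by linarith : 0 ≤ 1 - 2 * p) (by ring)
  simp only [smul_eq_mul] at hc
  rw [hMq] at hc
  have h0 : 0 ≤ 2 * p * M + (1 - 2 * p) * b :=
    add_nonneg (by positivity) (mul_nonneg (by linarith) hb)
  have h2 : 2 * p * M + (1 - 2 * p) * b
      ≤ (p * a ^ (1 + s) + (1 - p) * b ^ (1 + s)) ^ (1 / (1 + s)) := by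
    have := Real.rpow_le_rpow (by positivity) hc (z := 1 / (1 + s)) (by positivity)
    rw [← Real.rpow_mul h0, mul_one_div_cancel hq.ne', Real.rpow_one] at this
    refine this.trans (le_of_eq ?_)
    congr 1
    ring
  exact h1.trans (pow_le_pow_left₀ h0 h2 2)

lemma two_point (s : ℝ) (hs0 : 0 ≤ s) (hs1 : s ≤ 1) (p : ℝ) (hp0 : 0 ≤ p) (hp1 : p ≤ 1)
    (a b : ℝ) (ha : 0 ≤ a) (hb : 0 ≤ b) :
    (p * a + (1 - p) * b) ^ 2 + s * (min p (1 - p)) ^ 2 * (a - b) ^ 2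
      ≤ ((p * a ^ (1 + s) + (1 - p) * b ^ (1 + s)) ^ (1 / (1 + s))) ^ 2 := by
  rcases le_total p (1 - p) with h | h
  · rw [min_eq_left h]
    exact two_point_half s hs0 hs1 p hp0 (by linarith) a b ha hb
  · rw [min_eq_right h]
    have := two_point_half s hs0 hs1 (1 - p) (by linarith) (by linarith) b a hb ha
    rw [show 1 - (1 - p) = p by ring] at this
    rw [add_comm (p * a ^ (1 + s))]
    nlinarith

/-- The one-coordinate character. -/
noncomputable def cc (p : ℝ) (b : Bool) : ℝ :=
  ((if b then (1:ℝ) else -1) - (2 * p - 1)) / (2 * Real.sqrt (p * (1 - p)))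

/-- The one-coordinate noise kernel. -/
noncomputable def kk (p ρ : ℝ) (b c : Bool) : ℝ :=
  (if c then p else 1 - p) * (1 + ρ * (cc p b * cc p c))

lemma noise_kernel (p ρ : ℝ) {n : ℕ} (f : (Fin n → Bool) → ℝ) (x : Fin n → Bool) :
    noiseOp p ρ f x = ∑ y, f y * ∏ i, kk p ρ (x i) (y i) := by
  unfold noiseOp fhat pE
  simp_rw [Finset.mul_sum, Finset.sum_mul]
  rw [Finset.sum_comm]
  refine Finset.sum_congr rfl fun y _ => ?_
  unfold kk
  rw [Finset.prod_mul_distrib, Finset.prod_one_add, Finset.powerset_univ, Finset.mul_sum,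
    Finset.mul_sum]
  refine Finset.sum_congr rfl fun S _ => ?_
  rw [Finset.prod_mul_distrib, Finset.prod_mul_distrib, Finset.prod_const]
  unfold pwt chi cc
  ring

lemma sum_cons {n : ℕ} (F : (Fin (n + 1) → Bool) → ℝ) :
    ∑ x, F x = ∑ x, F (Fin.cons true x) + ∑ x, F (Fin.cons false x) := by
  rw [← (Fin.consEquiv (fun _ : Fin (n + 1) => Bool)).sum_comp, Fintype.sum_prod_type]
  simp [Fin.consEquiv]

lemma pE_cons (p : ℝ) {n : ℕ} (F : (Fin (n + 1) → Bool) → ℝ) :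
    pE p F = p * pE p (fun x => F (Fin.cons true x))
      + (1 - p) * pE p (fun x => F (Fin.cons false x)) := by
  unfold pE pwt
  rw [sum_cons]
  simp [Fin.prod_univ_succ, Finset.mul_sum, mul_assoc]

lemma noise_cons (p ρ : ℝ) {n : ℕ} (f : (Fin (n + 1) → Bool) → ℝ) (b : Bool) (x : Fin n → Bool) :
    noiseOp p ρ f (Fin.cons b x)
      = kk p ρ b true * noiseOp p ρ (fun y => f (Fin.cons true y)) x
        + kk p ρ b false * noiseOp p ρ (fun y => f (Fin.cons false y)) x := by
  rw [noise_kernel, noise_kernel, noise_kernel, sum_cons, Finset.mul_sum, Finset.mul_sum]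
  congr 1 <;>
  · refine Finset.sum_congr rfl fun y _ => ?_
    simp [Fin.prod_univ_succ]
    ring

lemma pwt_nonneg (p : ℝ) (h0 : 0 ≤ p) (h1 : p ≤ 1) {n : ℕ} (x : Fin n → Bool) : 0 ≤ pwt p x := by
  unfold pwt
  refine Finset.prod_nonneg fun i _ => ?_
  split_ifs <;> linarith

lemma pE_nonneg (p : ℝ) (h0 : 0 ≤ p) (h1 : p ≤ 1) {n : ℕ} (F : (Fin n → Bool) → ℝ)
    (hF : ∀ x, 0 ≤ F x) : 0 ≤ pE p F :=
  Finset.sum_nonneg fun x _ => mul_nonneg (pwt_nonneg p h0 h1 x) (hF x)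

lemma pE_cs (p : ℝ) (h0 : 0 ≤ p) (h1 : p ≤ 1) {n : ℕ} (g h : (Fin n → Bool) → ℝ) :
    pE p (fun x => g x * h x) ≤
      √(pE p fun x => g x ^ 2) * √(pE p fun x => h x ^ 2) := by
  have := Real.sum_mul_le_sqrt_mul_sqrt Finset.univ (fun x => √(pwt p x) * g x)
    (fun x => √(pwt p x) * h x)
  unfold pE
  have e1 : ∀ x, √(pwt p x) * g x * (√(pwt p x) * h x) = pwt p x * (g x * h x) := fun x => by
    have := Real.mul_self_sqrt (pwt_nonneg p h0 h1 x)
    linear_combination (g x * h x) * this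
  have e2 : ∀ (k : (Fin n → Bool) → ℝ) (x), (√(pwt p x) * k x) ^ 2 = pwt p x * k x ^ 2 :=
    fun k x => by rw [mul_pow, Real.sq_sqrt (pwt_nonneg p h0 h1 x)]
  simp only [e1, e2] at this
  exact this

lemma kk_vals (p ρ : ℝ) (hp : p ∈ Set.Ioo (0:ℝ) 1) :
    kk p ρ true true = p + ρ * (1 - p) ∧ kk p ρ true false = (1 - p) * (1 - ρ) ∧
    kk p ρ false true = p * (1 - ρ) ∧ kk p ρ false false = (1 - p) + ρ * p := by
  obtain ⟨h0, h1⟩ := hp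
  have hpos : 0 < p * (1 - p) := mul_pos h0 (by linarith)
  have hr : 0 < √(p * (1 - p)) := Real.sqrt_pos.2 hpos
  have hr2 : √(p * (1 - p)) ^ 2 = p * (1 - p) := Real.sq_sqrt hpos.le
  have h1p : (1 - p) ≠ 0 := by linarith
  set r := √(p * (1 - p))
  have ct : cc p true = (1 - p) / r := by
    unfold cc; simp only [if_true]; field_simp; ring
  have cf : cc p false = - p / r := by
    unfold cc; simp; field_simp; ring
  have tt : cc p true * cc p true = (1 - p) / p := by
    rw [ct, div_mul_div_comm, ← sq, ← sq, hr2]; field_simp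
  have tf : cc p true * cc p false = -1 := by
    rw [ct, cf, div_mul_div_comm, ← sq, hr2]; field_simp
  have ff : cc p false * cc p false = p / (1 - p) := by
    rw [cf, div_mul_div_comm, ← sq r, hr2]; field_simp
  unfold kk
  rw [mul_comm (cc p false) (cc p true), tt, tf, ff]
  simp only [if_true]
  refine ⟨?_, ?_, ?_, ?_⟩
  · field_simp
  · simp only [Bool.false_eq_true, if_false]; ring
  · ring
  · simp; field_simp

lemma main_ind (p : ℝ) (hp : p ∈ Set.Ioo (0:ℝ) 1) (s ρ : ℝ) (hs0 : 0 ≤ s) (hs1 : s ≤ 1)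
    (hρ : ρ ^ 2 * (p * (1 - p)) = s * (min p (1 - p)) ^ 2) (hρ1 : ρ ^ 2 ≤ 1) (n : ℕ) :
    ∀ f : (Fin n → Bool) → ℝ,
    pE p (fun x => noiseOp p ρ f x ^ 2) ≤ ((pE p fun x => |f x| ^ (1 + s)) ^ (1 / (1 + s))) ^ 2 := by
  have hq : 0 < 1 + s := by linarith
  have h0 := hp.1.le
  have h1 := hp.2.le
  induction n with
  | zero =>
    intro f
    have e : ∀ x, noiseOp p ρ f x = f default := by
      intro x
      rw [noise_kernel]
      simp only [Finset.univ_unique, Finset.univ_eq_empty, Finset.prod_empty, mul_one,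
        Finset.sum_singleton]
      exact congrArg f (Subsingleton.elim _ _)
    simp only [pE, pwt, Finset.univ_unique, Finset.univ_eq_empty, Finset.prod_empty, one_mul,
      Finset.sum_singleton, e]
    rw [← Real.rpow_mul (abs_nonneg _), mul_one_div_cancel hq.ne', Real.rpow_one, sq_abs]
    exact le_of_eq (congrArg (fun z => f z ^ 2) (Subsingleton.elim _ _))
  | succ n ih =>
    intro f
    obtain ⟨ktt, ktf, kft, kff⟩ := kk_vals p ρ hp
    rw [pE_cons p (fun x => noiseOp p ρ f x ^ 2), pE_cons p (fun x => |f x| ^ (1 + s))]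
    simp only [noise_cons, ktt, ktf, kft, kff]
    have i1 := ih (fun y => f (Fin.cons true y))
    have i2 := ih (fun y => f (Fin.cons false y))
    have F1 : 0 ≤ pE p fun x : Fin n → Bool => |f (Fin.cons true x)| ^ (1 + s) :=
      pE_nonneg p h0 h1 _ fun x => by positivity
    have F2 : 0 ≤ pE p fun x : Fin n → Bool => |f (Fin.cons false x)| ^ (1 + s) :=
      pE_nonneg p h0 h1 _ fun x => by positivity
    generalize noiseOp p ρ (fun y => f (Fin.cons true y)) = g at *
    generalize noiseOp p ρ (fun y => f (Fin.cons false y)) = h at *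
    generalize (pE p fun x : Fin n → Bool => |f (Fin.cons true x)| ^ (1 + s)) = A at *
    generalize (pE p fun x : Fin n → Bool => |f (Fin.cons false x)| ^ (1 + s)) = B at *
    have X0 : 0 ≤ pE p fun x => g x ^ 2 := pE_nonneg p h0 h1 _ fun x => by positivity
    have Y0 : 0 ≤ pE p fun x => h x ^ 2 := pE_nonneg p h0 h1 _ fun x => by positivity
    have cs := pE_cs p h0 h1 g h
    have expand : ∀ u v : ℝ, pE p (fun x => (u * g x + v * h x) ^ 2)
        = u ^ 2 * pE p (fun x => g x ^ 2) + 2 * u * v * pE p (fun x => g x * h x)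
          + v ^ 2 * pE p (fun x => h x ^ 2) := by
      intro u v
      unfold pE
      rw [Finset.mul_sum, Finset.mul_sum, Finset.mul_sum, ← Finset.sum_add_distrib,
        ← Finset.sum_add_distrib]
      exact Finset.sum_congr rfl fun x _ => by ring
    rw [expand, expand]
    have sX := Real.sq_sqrt X0
    have sY := Real.sq_sqrt Y0
    have pX := Real.sqrt_nonneg (pE p fun x => g x ^ 2)
    have pY := Real.sqrt_nonneg (pE p fun x => h x ^ 2)
    generalize √(pE p fun x => g x ^ 2) = a at *
    generalize √(pE p fun x => h x ^ 2) = b at *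
    rw [← sX] at i1 ⊢
    rw [← sY] at i2 ⊢
    generalize (pE p fun x => g x * h x) = z at *
    have aA : a ^ (1 + s) ≤ A := by
      have := le_of_sq_le_sq i1 (by positivity)
      have := Real.rpow_le_rpow pX this hq.le
      rwa [← Real.rpow_mul F1, one_div_mul_cancel hq.ne', Real.rpow_one] at this
    have bB : b ^ (1 + s) ≤ B := by
      have := le_of_sq_le_sq i2 (by positivity)
      have := Real.rpow_le_rpow pY this hq.le
      rwa [← Real.rpow_mul F2, one_div_mul_cancel hq.ne', Real.rpow_one] at this
    have hp' : 0 ≤ 1 - p := by linarith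
    have tp := two_point s hs0 hs1 p h0 h1 a b pX pY
    have step : (p * a + (1 - p) * b) ^ 2 + s * (min p (1 - p)) ^ 2 * (a - b) ^ 2 ≤
        ((p * A + (1 - p) * B) ^ (1 / (1 + s))) ^ 2 := by
      refine tp.trans (pow_le_pow_left₀ (by positivity) ?_ 2)
      apply Real.rpow_le_rpow (by positivity) _ (by positivity)
      gcongr
    refine le_trans ?_ step
    rw [← hρ]
    have k := mul_le_mul_of_nonneg_left cs
      (mul_nonneg (mul_nonneg h0 hp') (by linarith : 0 ≤ 1 - ρ ^ 2))
    nlinarith [k]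

/-- Corollary of hypercontractivity: ‖T_{√(λ/(1-λ))·δ} f‖₂ ≤ ‖f‖_{1+δ²}. -/
theorem stmt4 (p : ℝ) (hp : p ∈ Set.Ioo (0:ℝ) 1) (δ : ℝ) (hδ : δ ∈ Set.Icc (0:ℝ) 1)
    (n : ℕ) (f : (Fin n → Bool) → ℝ) :
    pNorm p 2 (noiseOp p (Real.sqrt (min p (1 - p) / (1 - min p (1 - p))) * δ) f)
      ≤ pNorm p (1 + δ ^ 2) f := by
  have hs1 : δ ^ 2 ≤ 1 := pow_le_one₀ hδ.1 hδ.2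
  have hl0 : 0 < min p (1 - p) := lt_min hp.1 (by linarith [hp.2])
  have hl1 : min p (1 - p) ≤ 1 - min p (1 - p) := by
    linarith [min_le_left p (1 - p), min_le_right p (1 - p)]
  have hprod : p * (1 - p) = min p (1 - p) * (1 - min p (1 - p)) := by
    rcases le_total p (1 - p) with h | h
    · rw [min_eq_left h]
    · rw [min_eq_right h]; ring
  have hsq : (√(min p (1 - p) / (1 - min p (1 - p))) * δ) ^ 2
      = min p (1 - p) / (1 - min p (1 - p)) * δ ^ 2 := by
    rw [mul_pow, Real.sq_sqrt (div_nonneg hl0.le (by linarith))]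
  have key := main_ind p hp (δ ^ 2) (√(min p (1 - p) / (1 - min p (1 - p))) * δ)
    (sq_nonneg δ) hs1 (by
      rw [hsq, hprod]
      have : 1 - min p (1 - p) ≠ 0 := by linarith
      field_simp) (by
      rw [hsq]
      exact mul_le_one₀ ((div_le_one (by linarith)).2 hl1) (sq_nonneg δ) hs1) n f
  unfold pNorm
  simp only [Real.rpow_two, sq_abs]
  rw [← Real.sqrt_eq_rpow]
  refine Real.sqrt_le_iff.2 ⟨?_, key⟩
  exact Real.rpow_nonneg (pE_nonneg p hp.1.le hp.2.le _ fun x => by positivity) _
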